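/- arXiv:1902.05708 — 2 statements merged into one kernel-verified Lean document; each statement's English description precedes it below -/
import Mathlib

section
/- Let K be a field, D¹ an a×b matrix and D² a b×c matrix over K with D¹·D² = 0, with labels g¹_1,…,g¹_b ∈ ℤ² (for the columns of D¹, which are also the rows of D²) and g²_1,…,g²_c ∈ ℤ² (for the columns of D²), satisfying the support condition: D²(k,j) ≠ 0 implies g¹_k ≤ g²_j. For z ∈ ℤ² let V_z := span{e_k ∈ K^b : g¹_k ≤ z}. Let (v_1,z_1),…,(v_r,z_r) ∈ K^b × ℤ² be pairs such that for every z ∈ ℤ², the family {v_l : z_l ≤ z} is linearly independent and spans ker D¹ ∩ V_z. Then: (i) there is a unique r×c matrix P over K such that P(l,j) = 0 whenever z_l ≰ g²_j and D²(*,j) = Σ_l P(l,j)·v_l for every j; (ii) for every z ∈ ℤ², the linear map K^r → K^b sending e_l to v_l induces an isomorphism of vector spaces span{e_l : z_l ≤ z} / span{P(*,j) : g²_j ≤ z} ≅ (ker D¹ ∩ V_z) / span{D²(*,j) : g²_j ≤ z}. (The labeled matrix P is a presentation of the homology module ker D¹ / im D² of the free implicit representation (D¹, D²).) -/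
/-!
Write `φ : K^r → K^b` for the map `e_l ↦ v_l` and `E_z = span{e_l : z_l ≤ z}`, which is the space of
vectors vanishing at every `l` with `z_l ≰ z`. The hypothesis on the pairs `(v_l, z_l)` says that
`φ` restricts to an isomorphism from `E_z` onto `ker D¹ ∩ V_z` for every `z`
(`eq_zero_of_sum_smul_eq_zero` gives injectivity).

The support condition and `D¹ D² = 0` place the column `D²(*,j)` in `ker D¹ ∩ V_{g²_j}`, so it has
exactly one preimage under `φ` in `E_{g²_j}`; these preimages are the columns of `P`. If `g²_j ≤ z`
then `P(*,j) ∈ E_{g²_j} ⊆ E_z`, so for each `z` the isomorphism `E_z ≅ ker D¹ ∩ V_z` carries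
`span{P(*,j) : g²_j ≤ z}` onto `span{D²(*,j) : g²_j ≤ z}` and descends to the quotients.
-/

/-- The span of a set of standard basis vectors is a coordinate subspace. -/
lemma mem_span_single_iff {K : Type*} [Field K] {n : ℕ} (p : Fin n → Prop) (x : Fin n → K) :
    x ∈ Submodule.span K {w : Fin n → K | ∃ l : Fin n, p l ∧ w = Pi.single l 1} ↔
      ∀ l, ¬ p l → x l = 0 := by
  constructor
  · intro hx l hl
    induction hx using Submodule.span_induction with
    | mem w hw =>
      obtain ⟨k, hk, rfl⟩ := hw
      have hne : l ≠ k := fun h => hl (h ▸ hk)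
      simp [hne]
    | zero => rfl
    | add y w _ _ hy hw => simp [hy, hw]
    | smul t y _ hy => simp [hy]
  · intro h
    rw [pi_eq_sum_univ' x]
    refine Submodule.sum_mem _ fun l _ => ?_
    by_cases hl : p l
    · refine Submodule.smul_mem _ _ (Submodule.subset_span ⟨l, hl, ?_⟩)
      ext k
      simp [Pi.single_apply, eq_comm]
    · simp [h l hl]

/-- If `(v_l)_{p l}` is linearly independent, then `e_l ↦ v_l` is injective on the vectors
supported on `p`. -/
lemma eq_zero_of_sum_smul_eq_zero {K M : Type*} [Field K] [AddCommGroup M] [Module K M] {r : ℕ}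
    (v : Fin r → M) (p : Fin r → Prop)
    (hli : LinearIndependent K (fun l : {l : Fin r // p l} => v l.1))
    (x : Fin r → K) (hx : ∀ l, ¬ p l → x l = 0) (h : ∑ l, x l • v l = 0) : x = 0 := by
  classical
  have hsub : ∑ l : {l : Fin r // p l}, x l.1 • v l.1 = 0 := by
    have hfilter : ∑ l with p l, x l • v l = ∑ l, x l • v l := by
      refine Finset.sum_filter_of_ne fun l _ hl => ?_
      by_contra hpl
      exact hl (by simp [hx l hpl])
    rw [← h, ← hfilter]
    exact (Finset.sum_subtype _ (by simp) (fun l => x l • v l)).symm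
  ext l
  by_cases hl : p l
  · exact Fintype.linearIndependent_iff.mp hli (fun l => x l.1) hsub ⟨l, hl⟩
  · exact hx l hl

/-- Given a free implicit representation `(D¹, D²)` of a 2-parameter persistence module
(a chain complex of free modules in coordinates, with `D¹ · D² = 0`, column/row labels
`g¹` and column labels `g²` satisfying the support condition), and a family `(v_l, z_l)`
which at each grade `z` gives a basis of `ker D¹ ∩ V_z` (where `V_z = span{e_k : g¹_k ≤ z}`):
(i) there is a unique matrix `P` with `P(l,j) = 0` whenever `z_l ≰ g²_j` expressing the
columns of `D²` in terms of the `v_l`; (ii) for every `z`, the map `K^r → K^b` sending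
`e_l ↦ v_l` induces an isomorphism
`span{e_l : z_l ≤ z}/span{P(*,j) : g²_j ≤ z} ≅ (ker D¹ ∩ V_z)/span{D²(*,j) : g²_j ≤ z}`,
i.e. `P` (with row labels `z_l`, column labels `g²_j`) is a presentation of the homology
module `ker D¹/im D²`. -/
theorem presentation_of_homology_from_FIRep {K : Type*} [Field K] {a b c : ℕ}
    (D1 : Matrix (Fin a) (Fin b) K) (D2 : Matrix (Fin b) (Fin c) K)
    (h0 : D1 * D2 = 0)
    (g1 : Fin b → ℤ × ℤ) (g2 : Fin c → ℤ × ℤ)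
    (hsupp : ∀ (k : Fin b) (j : Fin c), D2 k j ≠ 0 → g1 k ≤ g2 j)
    (r : ℕ) (v : Fin r → Fin b → K) (zl : Fin r → ℤ × ℤ)
    (hbasis : ∀ z : ℤ × ℤ,
      LinearIndependent K (fun l : {l : Fin r // zl l ≤ z} => v l.1) ∧
      Submodule.span K {w : Fin b → K | ∃ l : Fin r, zl l ≤ z ∧ w = v l}
        = LinearMap.ker D1.mulVecLin ⊓
            Submodule.span K {w : Fin b → K | ∃ k : Fin b, g1 k ≤ z ∧ w = Pi.single k 1}) :
    (∃! P : Matrix (Fin r) (Fin c) K,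
      (∀ (l : Fin r) (j : Fin c), ¬ zl l ≤ g2 j → P l j = 0) ∧
      ∀ j : Fin c, (fun i => D2 i j) = ∑ l : Fin r, P l j • v l) ∧
    (∀ P : Matrix (Fin r) (Fin c) K,
      ((∀ (l : Fin r) (j : Fin c), ¬ zl l ≤ g2 j → P l j = 0) ∧
        ∀ j : Fin c, (fun i => D2 i j) = ∑ l : Fin r, P l j • v l) →
      ∀ z : ℤ × ℤ,
        -- the map `e_l ↦ v_l` sends `span{e_l : z_l ≤ z}` into `ker D¹ ∩ V_z` …
        (∀ x ∈ Submodule.span K {w : Fin r → K | ∃ l : Fin r, zl l ≤ z ∧ w = Pi.single l 1},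
          (∑ l : Fin r, x l • v l) ∈
            LinearMap.ker D1.mulVecLin ⊓
              Submodule.span K {w : Fin b → K | ∃ k : Fin b, g1 k ≤ z ∧ w = Pi.single k 1}) ∧
        -- … the induced map on quotients is injective …
        (∀ x ∈ Submodule.span K {w : Fin r → K | ∃ l : Fin r, zl l ≤ z ∧ w = Pi.single l 1},
          ((∑ l : Fin r, x l • v l) ∈
              Submodule.span K {w : Fin b → K | ∃ j : Fin c, g2 j ≤ z ∧ w = fun i => D2 i j}
            ↔ x ∈ Submodule.span K
                {w : Fin r → K | ∃ j : Fin c, g2 j ≤ z ∧ w = fun l => P l j})) ∧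
        -- … and surjective.
        (∀ u ∈ LinearMap.ker D1.mulVecLin ⊓
            Submodule.span K {w : Fin b → K | ∃ k : Fin b, g1 k ≤ z ∧ w = Pi.single k 1},
          ∃ x ∈ Submodule.span K {w : Fin r → K | ∃ l : Fin r, zl l ≤ z ∧ w = Pi.single l 1},
            u - (∑ l : Fin r, x l • v l) ∈
              Submodule.span K
                {w : Fin b → K | ∃ j : Fin c, g2 j ≤ z ∧ w = fun i => D2 i j})) := by
  classical
  set φ : (Fin r → K) →ₗ[K] (Fin b → K) := Fintype.linearCombination K v with hφ
  have hφa : ∀ x, ∑ l, x l • v l = φ x := fun x => rfl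
  have hmapE : ∀ z, (Submodule.span K
      {w : Fin r → K | ∃ l : Fin r, zl l ≤ z ∧ w = Pi.single l 1}).map φ =
      LinearMap.ker D1.mulVecLin ⊓
        Submodule.span K {w : Fin b → K | ∃ k : Fin b, g1 k ≤ z ∧ w = Pi.single k 1} := by
    intro z
    rw [← (hbasis z).2, Submodule.map_span]
    congr 1
    ext w
    constructor
    · rintro ⟨_, ⟨l, hl, rfl⟩, rfl⟩
      exact ⟨l, hl, by simp [hφ]⟩
    · rintro ⟨l, hl, rfl⟩
      exact ⟨_, ⟨l, hl, rfl⟩, by simp [hφ]⟩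
  have hinj : ∀ z, ∀ x y : Fin r → K, (∀ l, ¬ zl l ≤ z → x l = 0) →
      (∀ l, ¬ zl l ≤ z → y l = 0) → φ x = φ y → x = y := by
    intro z x y hx hy hxy
    refine sub_eq_zero.mp (eq_zero_of_sum_smul_eq_zero v _ (hbasis z).1 (x - y) ?_ ?_)
    · intro l hl
      simp [hx l hl, hy l hl]
    · rw [hφa, map_sub, hxy, sub_self]
  have hcol : ∀ j, ∃ x : Fin r → K, (∀ l, ¬ zl l ≤ g2 j → x l = 0) ∧
      φ x = fun i => D2 i j := by
    intro j
    have hmem : (fun i => D2 i j) ∈ LinearMap.ker D1.mulVecLin ⊓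
        Submodule.span K {w : Fin b → K | ∃ k : Fin b, g1 k ≤ g2 j ∧ w = Pi.single k 1} := by
      refine ⟨?_, (mem_span_single_iff _ _).mpr fun k hk => ?_⟩
      · change D1.mulVec (fun i => D2 i j) = 0
        ext i
        exact congrFun (congrFun h0 i) j
      · by_contra hne
        exact hk (hsupp k j hne)
    rw [← hmapE] at hmem
    obtain ⟨x, hx, hxe⟩ := hmem
    exact ⟨x, (mem_span_single_iff _ _).mp hx, hxe⟩
  refine ⟨?_, ?_⟩
  · choose Q hQ0 hQ using hcol
    refine ⟨fun l j => Q j l, ⟨fun l j h => hQ0 j l h, fun j => (hQ j).symm⟩, ?_⟩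
    rintro P ⟨hP0, hP⟩
    ext l j
    have hPj : φ (fun l => P l j) = fun i => D2 i j := (hP j).symm
    exact congrFun (hinj (g2 j) (fun l => P l j) (Q j) (fun l => hP0 l j) (hQ0 j)
      (hPj.trans (hQ j).symm)) l
  · rintro P ⟨hP0, hP⟩ z
    have hPj : ∀ j, φ (fun l => P l j) = fun i => D2 i j := fun j => (hP j).symm
    have hmapP : (Submodule.span K
        {w : Fin r → K | ∃ j : Fin c, g2 j ≤ z ∧ w = fun l => P l j}).map φ =
        Submodule.span K {w : Fin b → K | ∃ j : Fin c, g2 j ≤ z ∧ w = fun i => D2 i j} := by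
      rw [Submodule.map_span]
      congr 1
      ext w
      constructor
      · rintro ⟨_, ⟨j, hj, rfl⟩, rfl⟩
        exact ⟨j, hj, hPj j⟩
      · rintro ⟨j, hj, rfl⟩
        exact ⟨_, ⟨j, hj, rfl⟩, hPj j⟩
    have hPE : Submodule.span K {w : Fin r → K | ∃ j : Fin c, g2 j ≤ z ∧ w = fun l => P l j} ≤
        Submodule.span K {w : Fin r → K | ∃ l : Fin r, zl l ≤ z ∧ w = Pi.single l 1} := by
      rw [Submodule.span_le]
      rintro _ ⟨j, hj, rfl⟩
      exact (mem_span_single_iff _ _).mpr fun l hl => hP0 l j fun h => hl (h.trans hj)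
    simp only [hφa]
    refine ⟨fun x hx => ?_, fun x hx => ⟨fun h => ?_, fun h => ?_⟩, fun u hu => ?_⟩
    · rw [← hmapE]
      exact Submodule.mem_map_of_mem hx
    · rw [← hmapP] at h
      obtain ⟨y, hy, hyx⟩ := h
      have hxy : y = x := hinj z y x ((mem_span_single_iff _ _).mp (hPE hy))
        ((mem_span_single_iff _ _).mp hx) hyx
      exact hxy ▸ hy
    · rw [← hmapP]
      exact Submodule.mem_map_of_mem h
    · rw [← hmapE] at hu
      obtain ⟨x, hx, rfl⟩ := hu
      exact ⟨x, hx, by simp⟩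
end

section
/- Let (P, h, c) be presentation data over a field K that is minimal, i.e., column-minimal and such that D^z = 0 for every z ∈ ℤ² (equivalently, every column of P with label z has zero entries in all rows with label z). Regard P as a linear map K^n → K^m, and for z ∈ ℤ² set N_z := ker P ∩ span{e_j ∈ K^n : c_j ≤ z} and β₂(z) := dim N_z − dim(N_{z−e₁} + N_{z−e₂}). Then β₂(z) ≥ 0 for all z, β₂(z) = 0 for all but finitely many z, and for every z ∈ ℤ²: dim M_z = #{i : h_i ≤ z} − #{j : c_j ≤ z} + Σ_{y ≤ z} β₂(y). (This is the 2-parameter case of the formula dim M_z = Σ_{i=0}^{d} (−1)^i Σ_{y ≤ z} β_i^M(y) expressing the Hilbert function in terms of the bigraded Betti numbers, since for a minimal presentation β₀(y) = #{i : h_i = y} and β₁(y) = #{j : c_j = y}.) -/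
/-!
Since `c j ≤ x` and `c j ≤ y` together mean `c j ≤ x ⊓ y`, the kernels satisfy
`N_x ⊓ N_y = N_{x ⊓ y}` (`Nker_inf`). Applied to `x = z - e₁`, `y = z - e₂`, this turns `β₂(z)` into
the mixed second difference `f(z) - f(z - e₁) - f(z - e₂) + f(z - e₁ - e₂)` of `f(z) = dim N_z`
(`beta2_eq`). As `f` vanishes at every grade that is not above a common lower bound of the column
labels, summing over `y ≤ z` telescopes to `f(z)` (`finsum_beta2`). Beyond a common upper bound of
the labels `N` no longer changes, hence `β₂` has finite support.

On the other side, `P` maps `span{e_j : c_j ≤ z}` onto `C_z` with kernel `N_z`, so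
`dim C_z = #{j : c_j ≤ z} - f(z)`, and `dim M_z = dim W_z - dim C_z` because `C_z ⊆ W_z`.

The span `span{e_j : c_j ≤ z}` occurring in `N_z` is `Wspace K c z`.
-/


/-- The grade-`z` piece `W_z = span{e_i : h_i ≤ z} ⊆ K^m` of the free module with
generators at grades `h_1, …, h_m`. -/
def Wspace (K : Type*) [Field K] {m : ℕ} (h : Fin m → ℤ × ℤ) (z : ℤ × ℤ) :
    Submodule K (Fin m → K) :=
  Submodule.span K {v : Fin m → K | ∃ i : Fin m, h i ≤ z ∧ v = Pi.single i 1}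

/-- The grade-`z` piece `C_z = span{P(*,j) : c_j ≤ z} ⊆ K^m` of the submodule generated
by the columns of `P` with labels `c_1, …, c_n`. -/
def Cspace {K : Type*} [Field K] {m n : ℕ} (P : Matrix (Fin m) (Fin n) K)
    (c : Fin n → ℤ × ℤ) (z : ℤ × ℤ) : Submodule K (Fin m → K) :=
  Submodule.span K {v : Fin m → K | ∃ j : Fin n, c j ≤ z ∧ v = fun i => P i j}

theorem Wspace_mono (K : Type*) [Field K] {m : ℕ} (h : Fin m → ℤ × ℤ)
    {z' z : ℤ × ℤ} (hz : z' ≤ z) : Wspace K h z' ≤ Wspace K h z :=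
  Submodule.span_mono fun v hv => by
    obtain ⟨i, hi, rfl⟩ := hv
    exact ⟨i, hi.trans hz, rfl⟩

theorem Cspace_mono {K : Type*} [Field K] {m n : ℕ} (P : Matrix (Fin m) (Fin n) K)
    (c : Fin n → ℤ × ℤ) {z' z : ℤ × ℤ} (hz : z' ≤ z) : Cspace P c z' ≤ Cspace P c z :=
  Submodule.span_mono fun v hv => by
    obtain ⟨j, hj, rfl⟩ := hv
    exact ⟨j, hj.trans hz, rfl⟩

/-- The grade-`z` piece `M_z = W_z / C_z` of the module presented by the presentation
data `(P, h, c)`, realized as the image of `W_z` in `K^m ⧸ C_z`. -/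
noncomputable def Mmod {K : Type*} [Field K] {m n : ℕ} (P : Matrix (Fin m) (Fin n) K)
    (h : Fin m → ℤ × ℤ) (c : Fin n → ℤ × ℤ) (z : ℤ × ℤ) :
    Submodule K ((Fin m → K) ⧸ Cspace P c z) :=
  (Wspace K h z).map (Cspace P c z).mkQ

/-- The structure map `M_{z'} → M_z` induced by the inclusion `W_{z'} ⊆ W_z`. -/
noncomputable def structMap {K : Type*} [Field K] {m n : ℕ} (P : Matrix (Fin m) (Fin n) K)
    (h : Fin m → ℤ × ℤ) (c : Fin n → ℤ × ℤ) {z' z : ℤ × ℤ} (hz : z' ≤ z) :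
    Mmod P h c z' →ₗ[K] Mmod P h c z :=
  LinearMap.restrict
    (Submodule.mapQ (Cspace P c z') (Cspace P c z) LinearMap.id
      (by simpa using Cspace_mono P c hz))
    (fun x hx => by
      obtain ⟨w, hw, rfl⟩ := hx
      exact ⟨w, Wspace_mono K h hz hw, by simp [Submodule.mapQ_apply]⟩)

/-- The presentation data `(P, h, c)` is column-minimal (semi-minimal) if for every
grade `z` the columns of `P` with label `z` are linearly independent modulo the span of
the columns with label `≤ z` but `≠ z`. -/
def ColumnMinimal {K : Type*} [Field K] {m n : ℕ} (P : Matrix (Fin m) (Fin n) K)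
    (c : Fin n → ℤ × ℤ) : Prop :=
  ∀ z : ℤ × ℤ, LinearIndependent K
    (fun j : {j : Fin n // c j = z} =>
      Submodule.Quotient.mk
        (p := Submodule.span K
          {v : Fin m → K | ∃ j' : Fin n, c j' ≤ z ∧ c j' ≠ z ∧ v = fun i => P i j'})
        (fun i => P i j.1))

/-- The submatrix `D^z` of `P` on the rows with label `z` and columns with label `z`. -/
def Dsub {K : Type*} [Field K] {m n : ℕ} (P : Matrix (Fin m) (Fin n) K)
    (h : Fin m → ℤ × ℤ) (c : Fin n → ℤ × ℤ) (z : ℤ × ℤ) :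
    Matrix {i : Fin m // h i = z} {j : Fin n // c j = z} K :=
  Matrix.of fun i j => P i.1 j.1


/-- The grade-`z` piece `N_z = ker P ∩ span{e_j : c_j ≤ z}` of the kernel of the
presentation matrix `P` (regarded as a map `K^n → K^m`) with column labels `c`. -/
noncomputable def Nker {K : Type*} [Field K] {m n : ℕ} (P : Matrix (Fin m) (Fin n) K)
    (c : Fin n → ℤ × ℤ) (z : ℤ × ℤ) : Submodule K (Fin n → K) :=
  LinearMap.ker P.mulVecLin ⊓
    Submodule.span K {w : Fin n → K | ∃ j : Fin n, c j ≤ z ∧ w = Pi.single j 1}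

/-- `β₂(z) = dim N_z − dim(N_{z−e₁} + N_{z−e₂})`. -/
noncomputable def beta2 {K : Type*} [Field K] {m n : ℕ} (P : Matrix (Fin m) (Fin n) K)
    (c : Fin n → ℤ × ℤ) (z : ℤ × ℤ) : ℤ :=
  (Module.finrank K ↥(Nker P c z) : ℤ)
    - (Module.finrank K ↥(Nker P c (z - (1, 0)) ⊔ Nker P c (z - (0, 1))) : ℤ)

theorem mem_Wspace_iff {K : Type*} [Field K] {m : ℕ} (h : Fin m → ℤ × ℤ) (z : ℤ × ℤ)
    (w : Fin m → K) : w ∈ Wspace K h z ↔ ∀ i, ¬ h i ≤ z → w i = 0 := by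
  constructor
  · intro hw
    induction hw using Submodule.span_induction with
    | mem x hx =>
      obtain ⟨i, hi, rfl⟩ := hx
      intro k hk
      have hne : k ≠ i := by rintro rfl; exact hk hi
      simp [hne]
    | zero => simp
    | add x y _ _ hx hy => intro i hi; simp [hx i hi, hy i hi]
    | smul a x _ hx => intro i hi; simp [hx i hi]
  · intro hw
    rw [pi_eq_sum_univ' w]
    refine Submodule.sum_mem _ fun i _ => ?_
    by_cases hi : h i ≤ z
    · refine Submodule.smul_mem _ _ (Submodule.subset_span ⟨i, hi, ?_⟩)
      ext k
      simp [Pi.single_apply]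
    · simp [hw i hi]

theorem finrank_Wspace (K : Type*) [Field K] {m : ℕ} (h : Fin m → ℤ × ℤ) (z : ℤ × ℤ) :
    Module.finrank K (Wspace K h z) = Nat.card {i : Fin m // h i ≤ z} := by
  classical
  have hli : LinearIndependent K
      (fun i : {i : Fin m // h i ≤ z} => (Pi.single i.1 1 : Fin m → K)) := by
    have := (Pi.basisFun K (Fin m)).linearIndependent.comp
      (Subtype.val : {i : Fin m // h i ≤ z} → Fin m) Subtype.val_injective
    convert this using 1
    ext i k
    simp
  have hset : Wspace K h z = Submodule.span K
      (Set.range fun i : {i : Fin m // h i ≤ z} => (Pi.single i.1 1 : Fin m → K)) := by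
    unfold Wspace
    congr 1
    ext v
    simp [eq_comm]
  rw [hset, finrank_span_eq_card hli, Nat.card_eq_fintype_card]

theorem mem_Nker_iff {K : Type*} [Field K] {m n : ℕ} (P : Matrix (Fin m) (Fin n) K)
    (c : Fin n → ℤ × ℤ) (z : ℤ × ℤ) (w : Fin n → K) :
    w ∈ Nker P c z ↔ P.mulVec w = 0 ∧ ∀ j, ¬ c j ≤ z → w j = 0 := by
  rw [← mem_Wspace_iff c z w]
  exact Iff.rfl

theorem Nker_mono {K : Type*} [Field K] {m n : ℕ} (P : Matrix (Fin m) (Fin n) K)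
    (c : Fin n → ℤ × ℤ) {x y : ℤ × ℤ} (hxy : x ≤ y) : Nker P c x ≤ Nker P c y :=
  inf_le_inf_left _ (Wspace_mono K c hxy)

theorem Nker_inf {K : Type*} [Field K] {m n : ℕ} (P : Matrix (Fin m) (Fin n) K)
    (c : Fin n → ℤ × ℤ) (x y : ℤ × ℤ) : Nker P c x ⊓ Nker P c y = Nker P c (x ⊓ y) := by
  ext w
  simp only [Submodule.mem_inf, mem_Nker_iff, le_inf_iff]
  grind

/-- `N_z` depends only on which column labels lie below `z`. -/
theorem Nker_congr {K : Type*} [Field K] {m n : ℕ} (P : Matrix (Fin m) (Fin n) K)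
    (c : Fin n → ℤ × ℤ) {x y : ℤ × ℤ} (hxy : ∀ j, c j ≤ x ↔ c j ≤ y) :
    Nker P c x = Nker P c y := by
  ext w
  simp only [mem_Nker_iff, hxy]

theorem finrank_Nker_eq_zero {K : Type*} [Field K] {m n : ℕ} (P : Matrix (Fin m) (Fin n) K)
    (c : Fin n → ℤ × ℤ) {a y : ℤ × ℤ} (ha : ∀ j, a ≤ c j) (hy : ¬ a ≤ y) :
    Module.finrank K (Nker P c y) = 0 := by
  have : Nker P c y = ⊥ := by
    rw [eq_bot_iff]
    intro w hw
    rw [mem_Nker_iff] at hw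
    rw [Submodule.mem_bot]
    ext j
    exact hw.2 j fun hj => hy ((ha j).trans hj)
  rw [this, finrank_bot]

theorem beta2_nonneg {K : Type*} [Field K] {m n : ℕ} (P : Matrix (Fin m) (Fin n) K)
    (c : Fin n → ℤ × ℤ) (z : ℤ × ℤ) : 0 ≤ beta2 P c z := by
  have hle : Nker P c (z - (1, 0)) ⊔ Nker P c (z - (0, 1)) ≤ Nker P c z :=
    sup_le (Nker_mono P c (by simp [Prod.le_def])) (Nker_mono P c (by simp [Prod.le_def]))
  have := Submodule.finrank_mono hle
  unfold beta2
  omega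

/-- `β₂` is the mixed second difference of the dimension function of `N`. -/
theorem beta2_eq {K : Type*} [Field K] {m n : ℕ} (P : Matrix (Fin m) (Fin n) K)
    (c : Fin n → ℤ × ℤ) (x y : ℤ) :
    beta2 P c (x, y) =
      ((Module.finrank K (Nker P c (x, y)) : ℤ) - Module.finrank K (Nker P c (x, y - 1)))
        - ((Module.finrank K (Nker P c (x - 1, y)) : ℤ)
          - Module.finrank K (Nker P c (x - 1, y - 1))) := by
  have hdim := Submodule.finrank_sup_add_finrank_inf_eq
    (Nker P c ((x, y) - (1, 0))) (Nker P c ((x, y) - (0, 1)))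
  have hinf : ((x, y) - (1, 0) : ℤ × ℤ) ⊓ ((x, y) - (0, 1)) = (x - 1, y - 1) := by
    ext <;> simp
  have h₁ : ((x, y) - (1, 0) : ℤ × ℤ) = (x - 1, y) := by ext <;> simp
  have h₂ : ((x, y) - (0, 1) : ℤ × ℤ) = (x, y - 1) := by ext <;> simp
  rw [Nker_inf, hinf, h₁, h₂] at hdim
  unfold beta2
  rw [h₁, h₂]
  omega

/-- `β₂` is supported in any box containing all column labels. -/
theorem mem_Icc_of_beta2_ne_zero {K : Type*} [Field K] {m n : ℕ}
    (P : Matrix (Fin m) (Fin n) K) (c : Fin n → ℤ × ℤ) {a b : ℤ × ℤ} (ha : ∀ j, a ≤ c j)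
    (hb : ∀ j, c j ≤ b) {y : ℤ × ℤ} (hy : beta2 P c y ≠ 0) : y ∈ Set.Icc a b := by
  obtain ⟨y₁, y₂⟩ := y
  constructor
  · by_contra hay
    apply hy
    have hmono : ∀ u : ℤ × ℤ, u ≤ (y₁, y₂) → Module.finrank K (Nker P c u) = 0 :=
      fun u hu => finrank_Nker_eq_zero P c ha fun h' => hay (h'.trans hu)
    rw [beta2_eq, hmono _ le_rfl, hmono, hmono, hmono] <;> simp [Prod.le_def]
  · by_contra hyb
    apply hy
    rw [beta2_eq]
    -- Past `b` in one coordinate, lowering that coordinate by one keeps the same column labels.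
    rcases (by simpa [Prod.le_def, -not_and, not_and_or] using hyb : b.1 < y₁ ∨ b.2 < y₂) with h | h
    · have key : ∀ t, Nker P c (y₁, t) = Nker P c (y₁ - 1, t) := fun t =>
        Nker_congr P c fun j => by
          have := (hb j).1
          simp only [Prod.le_def]
          omega
      rw [key, key]
      ring
    · have key : ∀ t, Nker P c (t, y₂) = Nker P c (t, y₂ - 1) := fun t =>
        Nker_congr P c fun j => by
          have := (hb j).2
          simp only [Prod.le_def]
          omega
      rw [key, key]
      ring

theorem exists_label_bounds {n : ℕ} (c : Fin n → ℤ × ℤ) (z : ℤ × ℤ) :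
    ∃ a b : ℤ × ℤ, a ≤ z ∧ (∀ j, a ≤ c j) ∧ ∀ j, c j ≤ b := by
  obtain ⟨a, ha⟩ := ((Set.finite_range c).insert z).bddBelow
  obtain ⟨b, hb⟩ := (Set.finite_range c).bddAbove
  exact ⟨a, b, ha (Set.mem_insert _ _), fun j => ha (Set.mem_insert_of_mem _ ⟨j, rfl⟩),
    fun j => hb ⟨j, rfl⟩⟩

theorem sum_Icc_int_sub (g : ℤ → ℤ) {a b : ℤ} (hab : a ≤ b) :
    ∑ x ∈ Finset.Icc a b, (g x - g (x - 1)) = g b - g (a - 1) := by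
  induction b, hab using Int.leInduction with
  | base => simp
  | succ b hab ih =>
    have hins : Finset.Icc a (b + 1) = insert (b + 1) (Finset.Icc a b) := by
      ext x
      simp only [Finset.mem_insert, Finset.mem_Icc]
      omega
    rw [hins, Finset.sum_insert (by simp), ih]
    simp

theorem finsum_beta2 {K : Type*} [Field K] {m n : ℕ} (P : Matrix (Fin m) (Fin n) K)
    (c : Fin n → ℤ × ℤ) (z : ℤ × ℤ) :
    ∑ᶠ (y : ℤ × ℤ) (_ : y ≤ z), beta2 P c y = Module.finrank K (Nker P c z) := by
  obtain ⟨a, b, haz, ha, hb⟩ := exists_label_bounds c z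
  have hsum : ∑ᶠ (y : ℤ × ℤ) (_ : y ≤ z), beta2 P c y = ∑ y ∈ Finset.Icc a z, beta2 P c y := by
    refine finsum_cond_eq_sum_of_cond_iff _ fun {y} hy => ?_
    have := (mem_Icc_of_beta2_ne_zero P c ha hb hy).1
    simp [this]
  have hprod : Finset.Icc a z = Finset.Icc a.1 z.1 ×ˢ Finset.Icc a.2 z.2 := rfl
  rw [hsum, hprod, Finset.sum_product_right]
  have hinner : ∀ y : ℤ, ∑ x ∈ Finset.Icc a.1 z.1, beta2 P c (x, y) =
      (Module.finrank K (Nker P c (z.1, y)) : ℤ)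
        - Module.finrank K (Nker P c (z.1, y - 1)) := by
    intro y
    simp only [beta2_eq]
    rw [sum_Icc_int_sub (fun x => (Module.finrank K (Nker P c (x, y)) : ℤ)
        - Module.finrank K (Nker P c (x, y - 1))) haz.1,
      finrank_Nker_eq_zero P c (y := (a.1 - 1, y)) ha (by simp [Prod.le_def]),
      finrank_Nker_eq_zero P c (y := (a.1 - 1, y - 1)) ha (by simp [Prod.le_def])]
    simp
  simp only [hinner]
  rw [sum_Icc_int_sub (fun y => (Module.finrank K (Nker P c (z.1, y)) : ℤ)) haz.2,
    finrank_Nker_eq_zero P c (y := (z.1, a.2 - 1)) ha (by simp [Prod.le_def])]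
  simp

theorem Cspace_eq_map {K : Type*} [Field K] {m n : ℕ} (P : Matrix (Fin m) (Fin n) K)
    (c : Fin n → ℤ × ℤ) (z : ℤ × ℤ) :
    Cspace P c z = (Wspace K c z).map P.mulVecLin := by
  unfold Cspace Wspace
  rw [Submodule.map_span]
  congr 1
  ext v
  constructor
  · rintro ⟨j, hj, rfl⟩
    exact ⟨_, ⟨j, hj, rfl⟩, by ext i; simp⟩
  · rintro ⟨_, ⟨j, hj, rfl⟩, rfl⟩
    exact ⟨j, hj, by ext i; simp⟩

theorem Cspace_le_Wspace {K : Type*} [Field K] {m n : ℕ} (P : Matrix (Fin m) (Fin n) K)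
    (h : Fin m → ℤ × ℤ) (c : Fin n → ℤ × ℤ)
    (hsupp : ∀ (i : Fin m) (j : Fin n), P i j ≠ 0 → h i ≤ c j) (z : ℤ × ℤ) :
    Cspace P c z ≤ Wspace K h z := by
  refine Submodule.span_le.2 ?_
  rintro _ ⟨j, hj, rfl⟩
  refine (mem_Wspace_iff h z _).2 fun i hi => ?_
  by_contra hP
  exact hi ((hsupp i j hP).trans hj)

/-- Rank–nullity for the restriction of a linear map `f` to a subspace `p`. -/
theorem finrank_map_add_finrank_ker_inf {K V V' : Type*} [Field K] [AddCommGroup V] [Module K V]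
    [FiniteDimensional K V] [AddCommGroup V'] [Module K V'] (f : V →ₗ[K] V')
    (p : Submodule K V) :
    Module.finrank K (p.map f) + Module.finrank K (LinearMap.ker f ⊓ p : Submodule K V)
      = Module.finrank K p := by
  have hrn := (f.domRestrict p).finrank_range_add_finrank_ker
  rw [LinearMap.range_domRestrict, LinearMap.ker_domRestrict] at hrn
  have hinf : LinearMap.ker f ⊓ p = ((LinearMap.ker f).comap p.subtype).map p.subtype := by
    rw [Submodule.map_comap_subtype, inf_comm]
  rw [hinf, Submodule.finrank_map_subtype_eq]
  exact hrn

/-- For a minimal presentation `(P, h, c)` (column-minimal with `D^z = 0` for all `z`),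
the Hilbert function of the presented module `M` is given by
`dim M_z = #{i : h_i ≤ z} − #{j : c_j ≤ z} + Σ_{y ≤ z} β₂(y)`, where
`β₂(z) = dim N_z − dim(N_{z−e₁} + N_{z−e₂}) ≥ 0` is nonzero for only finitely many `z`.
(This is the 2-parameter case of the formula expressing the Hilbert function in terms of
the bigraded Betti numbers, since for a minimal presentation `β₀(y) = #{i : h_i = y}` and
`β₁(y) = #{j : c_j = y}`.) -/
theorem hilbert_function_from_minimal_presentation {K : Type*} [Field K] {m n : ℕ}
    (P : Matrix (Fin m) (Fin n) K) (h : Fin m → ℤ × ℤ) (c : Fin n → ℤ × ℤ)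
    (hsupp : ∀ (i : Fin m) (j : Fin n), P i j ≠ 0 → h i ≤ c j)
    (hmin : ColumnMinimal P c)
    (hdiag : ∀ z : ℤ × ℤ, Dsub P h c z = 0) :
    (∀ z : ℤ × ℤ, 0 ≤ beta2 P c z) ∧
    ({z : ℤ × ℤ | beta2 P c z ≠ 0}.Finite) ∧
    (∀ z : ℤ × ℤ,
      (Module.finrank K ↥(Mmod P h c z) : ℤ)
        = (Nat.card {i : Fin m // h i ≤ z} : ℤ) - (Nat.card {j : Fin n // c j ≤ z} : ℤ)
          + ∑ᶠ (y : ℤ × ℤ) (_ : y ≤ z), beta2 P c y) := by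
  refine ⟨beta2_nonneg P c, ?_, fun z => ?_⟩
  · obtain ⟨a, b, -, ha, hb⟩ := exists_label_bounds c 0
    exact (Set.finite_Icc a b).subset fun y hy => mem_Icc_of_beta2_ne_zero P c ha hb hy
  · have hC : Module.finrank K (Cspace P c z) + Module.finrank K (Nker P c z)
        = Nat.card {j : Fin n // c j ≤ z} := by
      rw [← finrank_Wspace K c z, Cspace_eq_map]
      exact finrank_map_add_finrank_ker_inf P.mulVecLin (Wspace K c z)
    have hM : Module.finrank K (Mmod P h c z) + Module.finrank K (Cspace P c z)
        = Nat.card {i : Fin m // h i ≤ z} := by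
      rw [← finrank_Wspace K h z,
        ← finrank_map_add_finrank_ker_inf (Cspace P c z).mkQ (Wspace K h z),
        Submodule.ker_mkQ, inf_eq_left.2 (Cspace_le_Wspace P h c hsupp z)]
      rfl
    rw [finsum_beta2]
    omega
end
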